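/- Assume l0, l1, l2, l3 ∈ ℤ_{≥0} with l0 + l3 + 1 = l1 + l2, l2 + l3 ≥ l0 + l1 + 1 and l1 + l3 ≥ l0 + l2 + 1, and let e1 > e3 > e2 be real numbers with e1+e2+e3 = 0 (corresponding to a purely imaginary modulus τ ∈ iℝ_{>0}). Then all the zeros of the spectral polynomial Q^{(l0,l1,l2,l3)}(E) are real and unequal. -/

import Mathlib

open Polynomial

/-- The polynomial `q(E) = −(E/4 − e1(ã2+ã3)² − e2(ã1+ã3)² − e3(ã1+ã2)² + e3·α·β)`,
where `α = ã0+ã1+ã2+ã3` and `β = −ã0+1/2+ã1+ã2+ã3`. -/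
noncomputable def heunQE (e1 e2 e3 a0 a1 a2 a3 : ℝ) : Polynomial ℝ :=
  Polynomial.C (e1 * (a2 + a3) ^ 2 + e2 * (a1 + a3) ^ 2 + e3 * (a1 + a2) ^ 2
      - e3 * ((a0 + a1 + a2 + a3) * (-a0 + 1 / 2 + a1 + a2 + a3)))
    - Polynomial.C (1 / 4 : ℝ) * Polynomial.X

/-- The coefficients `c_m` (polynomials in `E`) of the local Heun solution at `e3`, defined by
`c_0 = 1`, `(e1−e3)(e2−e3)γ3 c_1 = q(E)`, and for `m ≥ 1`
`(e1−e3)(e2−e3)(m+1)(m+γ3) c_{m+1} = −(m−1+α)(m−1+β) c_{m−1}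
  + [m((m−1+γ3)(e1+e2−2e3) + (e2−e3)γ1 + (e1−e3)γ2) + q(E)] c_m`,
with `γ_i = 2ã_i + 1/2`, `α = ã0+ã1+ã2+ã3`, `β = −ã0+1/2+ã1+ã2+ã3`. -/
noncomputable def heunC (e1 e2 e3 a0 a1 a2 a3 : ℝ) : ℕ → Polynomial ℝ
  | 0 => 1
  | 1 => Polynomial.C (((e1 - e3) * (e2 - e3) * (2 * a3 + 1 / 2))⁻¹)
      * heunQE e1 e2 e3 a0 a1 a2 a3
  | m + 2 =>
      Polynomial.C (((e1 - e3) * (e2 - e3) * ((m : ℝ) + 2) * ((m : ℝ) + 1 + (2 * a3 + 1 / 2)))⁻¹) *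
        (Polynomial.C (-(((m : ℝ) + (a0 + a1 + a2 + a3))
              * ((m : ℝ) + (-a0 + 1 / 2 + a1 + a2 + a3))))
            * heunC e1 e2 e3 a0 a1 a2 a3 m
          + (Polynomial.C (((m : ℝ) + 1) * (((m : ℝ) + (2 * a3 + 1 / 2)) * (e1 + e2 - 2 * e3)
                + (e2 - e3) * (2 * a1 + 1 / 2) + (e1 - e3) * (2 * a2 + 1 / 2)))
              + heunQE e1 e2 e3 a0 a1 a2 a3) * heunC e1 e2 e3 a0 a1 a2 a3 (m + 1))

/-- `P_{ã0,ã1,ã2,ã3}(E)`: the monic normalization of `c_{N+1}(E)`,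
where `N = −(ã0+ã1+ã2+ã3)`. -/
noncomputable def specP (e1 e2 e3 a0 a1 a2 a3 : ℝ) (N : ℕ) : Polynomial ℝ :=
  Polynomial.C ((heunC e1 e2 e3 a0 a1 a2 a3 (N + 1)).leadingCoeff)⁻¹ *
    heunC e1 e2 e3 a0 a1 a2 a3 (N + 1)

/-- The factor `P⁽⁰⁾(E)` of the spectral polynomial. -/
noncomputable def specP0 (e1 e2 e3 : ℝ) (l0 l1 l2 l3 : ℕ) : Polynomial ℝ :=
  if (l0 + l1 + l2 + l3) % 2 = 0 then
    specP e1 e2 e3 (-(l0 : ℝ) / 2) (-(l1 : ℝ) / 2) (-(l2 : ℝ) / 2) (-(l3 : ℝ) / 2)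
      ((l0 + l1 + l2 + l3) / 2)
  else if l1 + l2 + l3 + 3 ≤ l0 then
    specP e1 e2 e3 (-(l0 : ℝ) / 2) (((l1 : ℝ) + 1) / 2) (((l2 : ℝ) + 1) / 2) (((l3 : ℝ) + 1) / 2)
      ((l0 - l1 - l2 - l3 - 3) / 2)
  else if l0 = l1 + l2 + l3 + 1 then 1
  else
    specP e1 e2 e3 (((l0 : ℝ) + 1) / 2) (-(l1 : ℝ) / 2) (-(l2 : ℝ) / 2) (-(l3 : ℝ) / 2)
      ((l1 + l2 + l3 - l0 - 1) / 2)

/-- The factor `P⁽¹⁾(E)` of the spectral polynomial. -/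
noncomputable def specP1 (e1 e2 e3 : ℝ) (l0 l1 l2 l3 : ℕ) : Polynomial ℝ :=
  if (l0 + l1 + l2 + l3) % 2 = 0 then
    if l2 + l3 + 2 ≤ l0 + l1 then
      specP e1 e2 e3 (-(l0 : ℝ) / 2) (-(l1 : ℝ) / 2) (((l2 : ℝ) + 1) / 2) (((l3 : ℝ) + 1) / 2)
        ((l0 + l1 - l2 - l3) / 2 - 1)
    else if l0 + l1 = l2 + l3 then 1
    else
      specP e1 e2 e3 (((l0 : ℝ) + 1) / 2) (((l1 : ℝ) + 1) / 2) (-(l2 : ℝ) / 2) (-(l3 : ℝ) / 2)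
        ((l2 + l3 - l0 - l1) / 2 - 1)
  else
    if l0 + l2 + l3 + 3 ≤ l1 then
      specP e1 e2 e3 (((l0 : ℝ) + 1) / 2) (-(l1 : ℝ) / 2) (((l2 : ℝ) + 1) / 2) (((l3 : ℝ) + 1) / 2)
        ((l1 - l0 - l2 - l3 - 3) / 2)
    else if l1 = l0 + l2 + l3 + 1 then 1
    else
      specP e1 e2 e3 (-(l0 : ℝ) / 2) (((l1 : ℝ) + 1) / 2) (-(l2 : ℝ) / 2) (-(l3 : ℝ) / 2)
        ((l0 + l2 + l3 - l1 - 1) / 2)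

/-- The factor `P⁽²⁾(E)` of the spectral polynomial. -/
noncomputable def specP2 (e1 e2 e3 : ℝ) (l0 l1 l2 l3 : ℕ) : Polynomial ℝ :=
  if (l0 + l1 + l2 + l3) % 2 = 0 then
    if l1 + l3 + 2 ≤ l0 + l2 then
      specP e1 e2 e3 (-(l0 : ℝ) / 2) (((l1 : ℝ) + 1) / 2) (-(l2 : ℝ) / 2) (((l3 : ℝ) + 1) / 2)
        ((l0 + l2 - l1 - l3) / 2 - 1)
    else if l0 + l2 = l1 + l3 then 1
    else
      specP e1 e2 e3 (((l0 : ℝ) + 1) / 2) (-(l1 : ℝ) / 2) (((l2 : ℝ) + 1) / 2) (-(l3 : ℝ) / 2)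
        ((l1 + l3 - l0 - l2) / 2 - 1)
  else
    if l0 + l1 + l3 + 3 ≤ l2 then
      specP e1 e2 e3 (((l0 : ℝ) + 1) / 2) (((l1 : ℝ) + 1) / 2) (-(l2 : ℝ) / 2) (((l3 : ℝ) + 1) / 2)
        ((l2 - l0 - l1 - l3 - 3) / 2)
    else if l2 = l0 + l1 + l3 + 1 then 1
    else
      specP e1 e2 e3 (-(l0 : ℝ) / 2) (-(l1 : ℝ) / 2) (((l2 : ℝ) + 1) / 2) (-(l3 : ℝ) / 2)
        ((l0 + l1 + l3 - l2 - 1) / 2)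

/-- The factor `P⁽³⁾(E)` of the spectral polynomial. -/
noncomputable def specP3 (e1 e2 e3 : ℝ) (l0 l1 l2 l3 : ℕ) : Polynomial ℝ :=
  if (l0 + l1 + l2 + l3) % 2 = 0 then
    if l1 + l2 + 2 ≤ l0 + l3 then
      specP e1 e2 e3 (-(l0 : ℝ) / 2) (((l1 : ℝ) + 1) / 2) (((l2 : ℝ) + 1) / 2) (-(l3 : ℝ) / 2)
        ((l0 + l3 - l1 - l2) / 2 - 1)
    else if l0 + l3 = l1 + l2 then 1
    else
      specP e1 e2 e3 (((l0 : ℝ) + 1) / 2) (-(l1 : ℝ) / 2) (-(l2 : ℝ) / 2) (((l3 : ℝ) + 1) / 2)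
        ((l1 + l2 - l0 - l3) / 2 - 1)
  else
    if l0 + l1 + l2 + 3 ≤ l3 then
      specP e1 e2 e3 (((l0 : ℝ) + 1) / 2) (((l1 : ℝ) + 1) / 2) (((l2 : ℝ) + 1) / 2) (-(l3 : ℝ) / 2)
        ((l3 - l0 - l1 - l2 - 3) / 2)
    else if l3 = l0 + l1 + l2 + 1 then 1
    else
      specP e1 e2 e3 (-(l0 : ℝ) / 2) (-(l1 : ℝ) / 2) (-(l2 : ℝ) / 2) (((l3 : ℝ) + 1) / 2)
        ((l0 + l1 + l2 - l3 - 1) / 2)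

/-- The spectral polynomial `Q^{(l0,l1,l2,l3)}(E) = P⁽⁰⁾P⁽¹⁾P⁽²⁾P⁽³⁾` of the
Treibich-Verdier operator `H^{(l0,l1,l2,l3)}`. -/
noncomputable def specQ (e1 e2 e3 : ℝ) (l0 l1 l2 l3 : ℕ) : Polynomial ℝ :=
  specP0 e1 e2 e3 l0 l1 l2 l3 * specP1 e1 e2 e3 l0 l1 l2 l3 *
    specP2 e1 e2 e3 l0 l1 l2 l3 * specP3 e1 e2 e3 l0 l1 l2 l3

/-!
A three-term recurrence whose off-diagonal products are positive produces, by the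
Christoffel–Darboux identity, polynomials with real and simple zeros. This applies directly to the
factors `P⁽⁰⁾` and `P⁽³⁾`. For `P⁽¹⁾` the products have the wrong sign. The zeros of its coefficient
polynomial are the `E` for which the Heun operator has a polynomial solution, so the expansion point
`e3` may be traded for `e2`; there a transformation of Euler type exchanges `γ` and `β` while
preserving the diagonal and the off-diagonal products, and back at `e3` the new products are
positive. `P⁽²⁾` is the mirror image of `P⁽¹⁾`.

A common zero `E` of two factors yields polynomials `p`, `q` such that `p ∏ (x - e i) ^ a i` and
`q ∏ (x - e i) ^ b i` solve the same second-order equation. By Abel's formula their Wronskian is a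
multiple of `∏ (x - e i) ^ (-1 / 2)`, so a certain polynomial is a multiple of
`∏ (x - e i) ^ (1 / 2 - a i - b i)`. One of these exponents is not an integer, so the Wronskian
vanishes, `p / q` is a multiple of `∏ (x - e i) ^ (b i - a i)`, and this is impossible for the same
reason.
-/

section JacobiSystems

open Finset
open scoped ComplexConjugate

theorem isCoprime_of_splits_of_eval_ne_zero {K : Type*} [Field K] {p q : K[X]} (hp : p.Splits)
    (hp₀ : p ≠ 0) (h : ∀ x, p.eval x = 0 → q.eval x ≠ 0) : IsCoprime p q := by
  refine isCoprime_of_irreducible_dvd (fun h₀ ↦ hp₀ h₀.1) fun f hf hfp hfq ↦ ?_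
  obtain ⟨x, hx⟩ := exists_root_of_degree_eq_one
    ((hp.of_dvd hp₀ hfp).degree_eq_one_of_irreducible hf)
  exact h x (hx.dvd hfp) (hx.dvd hfq)

theorem splits_and_separable_of_associated {K : Type*} [Field K] {p q : K[X]}
    (hpq : Associated p q) (hp : p.Splits ∧ p.Separable) : q.Splits ∧ q.Separable :=
  ⟨hp.1.of_dvd hp.2.ne_zero hpq.dvd', hp.2.of_dvd hpq.dvd'⟩

/-- `c` satisfies the three-term recurrence of a Jacobi matrix with superdiagonal `r`, diagonal `b`
and subdiagonal `d`: the vector `(c 0, c 1, …)` is the formal eigenvector for the eigenvalue `X`,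
normalized by `c 0 = 1`. -/
structure IsJacobiSystem {R : Type*} [CommRing R] (c : ℕ → R[X]) (r b d : ℕ → R) : Prop where
  zero : c 0 = 1
  one : X = C (r 0) * c 1 + C (b 0)
  add_two (m : ℕ) :
    X * c (m + 1) = C (r (m + 1)) * c (m + 2) + C (b (m + 1)) * c (m + 1) + C (d m) * c m

namespace IsJacobiSystem

theorem degree_eq {K : Type*} [Field K] {c : ℕ → K[X]} {r b d : ℕ → K}
    (h : IsJacobiSystem c r b d) (hr : ∀ m, r m ≠ 0) (m : ℕ) : (c m).degree = m := by
  induction m using Nat.twoStepInduction with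
  | zero => simp only [h.zero, degree_one, Nat.cast_zero]
  | one =>
    have hc : C (r 0) * c 1 = X - C (b 0) := by linear_combination -h.one
    rw [← degree_C_mul (hr 0), hc, degree_X_sub_C, Nat.cast_one]
  | more m ih₀ ih₁ =>
    have hX : (X * c (m + 1)).degree = ((m + 2 : ℕ) : WithBot ℕ) := by
      rw [mul_comm, degree_mul_X, ih₁]; norm_cast
    have hlow : (b (m + 1) • c (m + 1) + d m • c m).degree < ((m + 2 : ℕ) : WithBot ℕ) := by
      refine (degree_add_le _ _).trans_lt (max_lt ?_ ?_)
      · exact (degree_smul_le _ _).trans_lt (by rw [ih₁]; norm_cast; omega)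
      · exact (degree_smul_le _ _).trans_lt (by rw [ih₀]; norm_cast; omega)
    have hc : C (r (m + 1)) * c (m + 2) =
        X * c (m + 1) - (b (m + 1) • c (m + 1) + d m • c m) := by
      simp only [smul_eq_C_mul]
      linear_combination -h.add_two m
    rw [← degree_C_mul (hr (m + 1)), hc, degree_sub_eq_left_of_degree_lt (hX ▸ hlow), hX]

variable {c : ℕ → ℝ[X]} {r b d : ℕ → ℝ}

theorem exists_christoffelDarboux_conj (h : IsJacobiSystem c r b d) (z : ℂ) {m : ℕ}
    (hpos : ∀ k < m, 0 < d k * r k) :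
    ∃ S : ℝ, 0 < S ∧ r m * (aeval z (c (m + 1)) * conj (aeval z (c m)) -
      aeval z (c m) * conj (aeval z (c (m + 1)))) = (z - conj z) * S := by
  induction m with
  | zero =>
    have h₁ := congrArg (aeval z) h.one
    simp only [aeval_X, map_add, map_mul, aeval_C, Complex.coe_algebraMap] at h₁
    have h₁' := congrArg conj h₁
    simp only [map_add, map_mul, Complex.conj_ofReal] at h₁'
    refine ⟨1, one_pos, ?_⟩
    simp only [h.zero, map_one, Complex.ofReal_one]
    linear_combination h₁' - h₁
  | succ m ih =>
    obtain ⟨S, hS, hm⟩ := ih fun k hk ↦ hpos k (hk.trans m.lt_succ_self)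
    have hdr := hpos m m.lt_succ_self
    have hr : (r m : ℂ) ≠ 0 := Complex.ofReal_ne_zero.2 (right_ne_zero_of_mul hdr.ne')
    have h₂ := congrArg (aeval z) (h.add_two m)
    simp only [aeval_X, map_add, map_mul, aeval_C, Complex.coe_algebraMap] at h₂
    have h₂' := congrArg conj h₂
    simp only [map_add, map_mul, Complex.conj_ofReal] at h₂'
    refine ⟨Complex.normSq (aeval z (c (m + 1))) + d m / r m * S, ?_, ?_⟩
    · have : 0 < d m / r m := div_pos_iff.2 (mul_pos_iff.1 hdr)
      have := Complex.normSq_nonneg (aeval z (c (m + 1)))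
      positivity
    · push_cast
      rw [Complex.normSq_eq_conj_mul_self]
      field_simp
      linear_combination (d m : ℂ) * hm - r m * conj (aeval z (c (m + 1))) * h₂ +
        r m * aeval z (c (m + 1)) * h₂'

theorem christoffelDarboux_self_pos (h : IsJacobiSystem c r b d) (x : ℝ) {m : ℕ}
    (hpos : ∀ k < m, 0 < d k * r k) :
    0 < r m * ((derivative (c (m + 1))).eval x * (c m).eval x -
      (derivative (c m)).eval x * (c (m + 1)).eval x) := by
  induction m with
  | zero =>
    have h₁ := congrArg (fun p ↦ (derivative p).eval x) h.one
    simp only [derivative_X, eval_one, derivative_add, derivative_C_mul, derivative_C, add_zero,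
      eval_C_mul] at h₁
    simp only [h.zero, derivative_one, eval_one, eval_zero]
    linarith
  | succ m ih =>
    have hm := ih fun k hk ↦ hpos k (hk.trans m.lt_succ_self)
    have hdr := hpos m m.lt_succ_self
    have h₂ := congrArg (eval x) (h.add_two m)
    have h₂' := congrArg (fun p ↦ (derivative p).eval x) (h.add_two m)
    simp only [derivative_mul, derivative_X, derivative_add, derivative_C, eval_add, eval_mul,
      eval_X, eval_C, eval_one, eval_zero] at h₂ h₂'
    have hstep : r (m + 1) * ((derivative (c (m + 2))).eval x * (c (m + 1)).eval x -
        (derivative (c (m + 1))).eval x * (c (m + 2)).eval x) =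
        (c (m + 1)).eval x ^ 2 + d m / r m * (r m * ((derivative (c (m + 1))).eval x *
          (c m).eval x - (derivative (c m)).eval x * (c (m + 1)).eval x)) := by
      have hr : r m ≠ 0 := right_ne_zero_of_mul hdr.ne'
      field_simp
      linear_combination (derivative (c (m + 1))).eval x * h₂ - (c (m + 1)).eval x * h₂'
    have hdiv : 0 < d m / r m := div_pos_iff.2 (mul_pos_iff.1 hdr)
    rw [hstep]
    positivity

theorem splits (h : IsJacobiSystem c r b d) {n : ℕ} (hpos : ∀ m, m + 1 < n → 0 < d m * r m) :
    (c n).Splits := by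
  cases n with
  | zero => simp only [h.zero, Splits.one]
  | succ m =>
    refine Splits.of_splits_map (algebraMap ℝ ℂ) (IsAlgClosed.splits _) fun z hz ↦ ?_
    have hroot : aeval z (c (m + 1)) = 0 := (mem_aroots.1 hz).2
    obtain ⟨S, hS, hCD⟩ :=
      h.exists_christoffelDarboux_conj z (m := m) fun k hk ↦ hpos k (by omega)
    rw [hroot, map_zero, zero_mul, mul_zero, sub_zero, mul_zero, eq_comm, mul_eq_zero,
      sub_eq_zero, Complex.ofReal_eq_zero, or_iff_left hS.ne', eq_comm] at hCD
    exact ⟨z.re, Complex.conj_eq_iff_re.1 hCD⟩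

theorem separable (h : IsJacobiSystem c r b d) {n : ℕ}
    (hpos : ∀ m, m + 1 < n → 0 < d m * r m) : (c n).Separable := by
  cases n with
  | zero => simpa only [h.zero] using separable_one
  | succ m =>
    have hCD (x : ℝ) := h.christoffelDarboux_self_pos x (m := m) fun k hk ↦ hpos k (by omega)
    have hne : c (m + 1) ≠ 0 := fun h0 ↦ by simpa [h0] using hCD 0
    refine isCoprime_of_splits_of_eval_ne_zero (h.splits hpos) hne fun x hx hx' ↦ ?_
    simpa [hx, hx'] using hCD x

theorem associated {K : Type*} [Field K] {c c' : ℕ → K[X]} {r r' b d d' : ℕ → K}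
    (h : IsJacobiSystem c r b d) (h' : IsJacobiSystem c' r' b d') (hr : ∀ m, r m ≠ 0)
    (hr' : ∀ m, r' m ≠ 0) (hrd : ∀ m, r m * d m = r' m * d' m) (m : ℕ) :
    Associated (c m) (c' m) := by
  set w : ℕ → K := fun m ↦ ∏ k ∈ range m, r k / r' k with hw
  have hw_ne (m : ℕ) : w m ≠ 0 := prod_ne_zero_iff.2 fun k _ ↦ div_ne_zero (hr k) (hr' k)
  have hw_succ (m : ℕ) : w (m + 1) * r' m = w m * r m := by
    simp only [hw]
    rw [prod_range_succ, mul_assoc, div_mul_cancel₀ _ (hr' m)]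
  have hcw : c' m = C (w m) * c m := by
    induction m using Nat.twoStepInduction with
    | zero => simp only [h.zero, h'.zero, hw, range_zero, prod_empty, C_1, mul_one]
    | one =>
      refine mul_left_cancel₀ (C_ne_zero.2 (hr' 0)) ?_
      have hw₁ := congrArg C (hw_succ 0)
      simp only [hw, range_zero, prod_empty, one_mul, C_mul, zero_add] at hw₁
      linear_combination h.one - h'.one - c 1 * hw₁
    | more m ih₀ ih₁ =>
      refine mul_left_cancel₀ (C_ne_zero.2 (hr' (m + 1))) ?_
      have hdw : w m * d' m = w (m + 1) * d m := by
        refine mul_left_cancel₀ (hr' m) ?_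
        linear_combination -w m * hrd m - d m * hw_succ m
      have hw₀ := congrArg C hdw
      have hw₁ := congrArg C (hw_succ (m + 1))
      have h₂ := h'.add_two m
      rw [ih₀, ih₁] at h₂
      simp only [C_mul] at hw₀ hw₁
      linear_combination C (w (m + 1)) * h.add_two m - h₂ - c m * hw₀ - c (m + 2) * hw₁
  rw [hcw]
  exact (associated_unit_mul_left _ _ (isUnit_C.2 (hw_ne m).isUnit)).symm

end IsJacobiSystem

/-- `y` is a formal eigenvector, for the eigenvalue `x`, of the Jacobi matrix with superdiagonal
`r`, diagonal `b` and subdiagonal `d`. -/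
structure IsJacobiEigenvector {R : Type*} [CommRing R] (r b d : ℕ → R) (x : R) (y : ℕ → R) :
    Prop where
  zero : x * y 0 = r 0 * y 1 + b 0 * y 0
  add_two (m : ℕ) : x * y (m + 1) = r (m + 1) * y (m + 2) + b (m + 1) * y (m + 1) + d m * y m

theorem IsJacobiSystem.isJacobiEigenvector_eval {R : Type*} [CommRing R] {c : ℕ → R[X]}
    {r b d : ℕ → R} (h : IsJacobiSystem c r b d) (x : R) :
    IsJacobiEigenvector r b d x fun m ↦ (c m).eval x where
  zero := by
    have := congrArg (Polynomial.eval x) h.one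
    simp only [eval_X, eval_add, eval_mul, eval_C] at this
    simpa only [h.zero, eval_one, mul_one] using this
  add_two m := by
    simpa only [eval_mul, eval_X, eval_add, eval_C] using
      congrArg (Polynomial.eval x) (h.add_two m)

section Truncation

variable {K : Type*} [Field K] {c : ℕ → K[X]} {r b d : ℕ → K} {x : K}

theorem IsJacobiEigenvector.eq_mul_eval {y : ℕ → K} (hy : IsJacobiEigenvector r b d x y)
    (h : IsJacobiSystem c r b d) (hr : ∀ m, r m ≠ 0) (m : ℕ) : y m = y 0 * (c m).eval x := by
  have hc := h.isJacobiEigenvector_eval x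
  induction m using Nat.twoStepInduction with
  | zero => rw [h.zero, eval_one, mul_one]
  | one =>
    have hc₀ := hc.zero
    rw [h.zero, eval_one] at hc₀
    exact mul_left_cancel₀ (hr 0) (by linear_combination y 0 * hc₀ - hy.zero)
  | more m ih₀ ih₁ =>
    refine mul_left_cancel₀ (hr (m + 1)) ?_
    linear_combination y 0 * hc.add_two m - hy.add_two m + (x - b (m + 1)) * ih₁ - d m * ih₀

theorem IsJacobiSystem.eval_eq_zero_iff_exists_polynomial (h : IsJacobiSystem c r b d)
    (hr : ∀ m, r m ≠ 0) {n : ℕ} (hd : ∀ m, m + 1 = n → d m = 0) :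
    (c n).eval x = 0 ↔
      ∃ Y : K[X], Y ≠ 0 ∧ Y.degree < n ∧ IsJacobiEigenvector r b d x Y.coeff := by
  have hc := h.isJacobiEigenvector_eval x
  constructor
  · intro hn
    set Y : K[X] := PowerSeries.trunc n (.mk fun m ↦ (c m).eval x)
    have hcoeff (m : ℕ) : Y.coeff m = if m < n then (c m).eval x else 0 := by
      rw [PowerSeries.coeff_trunc, PowerSeries.coeff_mk]
    have hcoeff_ge {m : ℕ} (hm : n ≤ m) : Y.coeff m = 0 := by rw [hcoeff, if_neg hm.not_gt]
    have hcoeff_le {m : ℕ} (hm : m ≤ n) : Y.coeff m = (c m).eval x := by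
      rcases hm.lt_or_eq with hm | rfl
      · rw [hcoeff, if_pos hm]
      · rw [hcoeff_ge le_rfl, hn]
    have hn₁ : 1 ≤ n := Nat.one_le_iff_ne_zero.2 fun h₀ ↦ by simp [h₀, h.zero] at hn
    refine ⟨Y, fun hY ↦ ?_, PowerSeries.degree_trunc_lt _ _, ?_, fun m ↦ ?_⟩
    · simpa [hY, h.zero] using hcoeff_le n.zero_le
    · rw [hcoeff_le n.zero_le, hcoeff_le hn₁]
      exact hc.zero
    · rcases lt_trichotomy (m + 1) n with hm | hm | hm
      · rw [hcoeff_le hm, hcoeff_le hm.le, hcoeff_le (by omega)]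
        exact hc.add_two m
      · rw [hcoeff_ge hm.ge, hcoeff_ge (by omega), hd m hm]
        ring
      · rw [hcoeff_ge hm.le, hcoeff_ge (by omega), hcoeff_ge (by omega)]
        ring
  · rintro ⟨Y, hY, hdeg, hYeig⟩
    have hYc := hYeig.eq_mul_eval h hr
    have hY₀ : Y.coeff 0 ≠ 0 := fun h₀ ↦ hY (ext fun m ↦ by rw [hYc, h₀, zero_mul, coeff_zero])
    have hYn := coeff_eq_zero_of_degree_lt hdeg
    rw [hYc] at hYn
    exact (mul_eq_zero.1 hYn).resolve_left hY₀

end Truncation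

end JacobiSystems

section Residues

variable {K : Type*} [Field K]

theorem exists_eq_pow_rootMultiplicity_mul_and_derivative {p : K[X]} (hp : p ≠ 0) (e : K) :
    ∃ s : K[X], s.eval e ≠ 0 ∧ p = (X - C e) ^ p.rootMultiplicity e * s ∧
      (X - C e) * derivative p = (X - C e) ^ p.rootMultiplicity e *
        (C (p.rootMultiplicity e : K) * s + (X - C e) * derivative s) := by
  obtain ⟨s, hs, hndvd⟩ := exists_eq_pow_rootMultiplicity_mul_and_not_dvd p hp e
  refine ⟨s, fun h ↦ hndvd (dvd_iff_isRoot.2 h), hs, ?_⟩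
  generalize p.rootMultiplicity e = n at hs
  subst hs
  rcases n with _ | n
  · simp only [pow_zero, one_mul, Nat.cast_zero, C_0, zero_mul, zero_add]
  · simp only [derivative_mul, derivative_X_sub_C_pow, Nat.add_sub_cancel, C_eq_natCast]
    ring

theorem eval_eq_rootMultiplicity_sub_mul {p q G V : K[X]} {e : K} (hp : p ≠ 0) (hq : q ≠ 0)
    (h : (X - C e) * G * wronskian p q = p * q * V) :
    V.eval e = (q.rootMultiplicity e - p.rootMultiplicity e) * G.eval e := by
  obtain ⟨s, hse, hs, hs'⟩ := exists_eq_pow_rootMultiplicity_mul_and_derivative hp e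
  obtain ⟨u, hue, hu, hu'⟩ := exists_eq_pow_rootMultiplicity_mul_and_derivative hq e
  set n := p.rootMultiplicity e
  set m := q.rootMultiplicity e
  have hcancel : G * (s * (C (m : K) * u + (X - C e) * derivative u) -
      (C (n : K) * s + (X - C e) * derivative s) * u) = s * u * V := by
    refine mul_left_cancel₀ (pow_ne_zero (n + m) (X_sub_C_ne_zero e)) ?_
    calc
      _ = G * ((X - C e) ^ n * s * ((X - C e) * derivative q) -
          (X - C e) * derivative p * ((X - C e) ^ m * u)) := by rw [hs', hu']; ring
      _ = (X - C e) * G * wronskian p q := by rw [← hs, ← hu, wronskian]; ring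
      _ = (X - C e) ^ n * s * ((X - C e) ^ m * u) * V := by rw [h, ← hs, ← hu]
      _ = _ := by ring
  have heval := congrArg (Polynomial.eval e) hcancel
  simp only [eval_mul, eval_sub, eval_add, eval_C, eval_X, sub_self, zero_mul, add_zero] at heval
  refine mul_left_cancel₀ (mul_ne_zero hse hue) ?_
  linear_combination -heval

end Residues

section PartialFractions

open Finset Lagrange

variable {ι : Type*} [Fintype ι] [DecidableEq ι]

/-- The numerator of the partial fraction `∑ i, t i / (X - z i)` over the common denominator
`∏ i, (X - z i)`, which is `Lagrange.nodal univ z`. -/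
noncomputable def partialFractionNumerator {R : Type*} [CommRing R] (z t : ι → R) : R[X] :=
  ∑ i, C (t i) * nodal (univ.erase i) z

theorem partialFractionNumerator_one {R : Type*} [CommRing R] (z : ι → R) :
    partialFractionNumerator z 1 = derivative (nodal univ z) := by
  simp only [partialFractionNumerator, Pi.one_apply, C_1, one_mul, derivative_nodal]

theorem partialFractionNumerator_add {R : Type*} [CommRing R] (z t s : ι → R) :
    partialFractionNumerator z (t + s) =
      partialFractionNumerator z t + partialFractionNumerator z s := by
  simp only [partialFractionNumerator, Pi.add_apply, C_add, add_mul, sum_add_distrib]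

theorem partialFractionNumerator_sub {R : Type*} [CommRing R] (z t s : ι → R) :
    partialFractionNumerator z (t - s) =
      partialFractionNumerator z t - partialFractionNumerator z s := by
  simp only [partialFractionNumerator, Pi.sub_apply, C_sub, sub_mul, sum_sub_distrib]

variable {K : Type*} [Field K]

theorem eval_partialFractionNumerator_node (z t : ι → K) (i : ι) :
    (partialFractionNumerator z t).eval (z i) = t i * (nodal (univ.erase i) z).eval (z i) := by
  rw [partialFractionNumerator, eval_finsetSum, sum_eq_single i, eval_C_mul]
  · intro j _ hji
    rw [eval_C_mul, eval_nodal_at_node (mem_erase.2 ⟨hji.symm, mem_univ i⟩), mul_zero]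
  · exact fun h ↦ absurd (mem_univ i) h

theorem eq_rootMultiplicity_sub_of_nodal_mul_wronskian {z t : ι → K} (hz : Function.Injective z)
    {p q : K[X]} (hp : p ≠ 0) (hq : q ≠ 0)
    (h : nodal univ z * wronskian p q = p * q * partialFractionNumerator z t) (i : ι) :
    t i = q.rootMultiplicity (z i) - p.rootMultiplicity (z i) := by
  rw [nodal_eq_mul_nodal_erase (mem_univ i)] at h
  have heval := eval_eq_rootMultiplicity_sub_mul hp hq h
  rw [eval_partialFractionNumerator_node] at heval
  refine mul_right_cancel₀ (eval_nodal_not_at_node fun j hj ↦ ?_) heval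
  exact hz.ne (ne_of_mem_erase hj).symm

/-- With `w' / w = T / P`, the functions `p` and `w q` solve the same equation, and
`P (p (w q)' - p' (w q)) = w R` for the polynomial `R` below. Abel's formula for their Wronskian is
thus a first-order equation for `R`. -/
theorem mul_derivative_gauged_wronskian {R : Type*} [CommRing R] {P T κ V U p q : R[X]}
    (hp : P * derivative (derivative p) + (derivative P - T - κ) * derivative p + V * p = 0)
    (hq : P * derivative (derivative q) + (derivative P + T - κ) * derivative q + U * q = 0)
    (hVU : P * (V - U + derivative T) = T * κ) :
    P * derivative (P * wronskian p q + p * q * T) = (P * wronskian p q + p * q * T) * κ := by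
  simp only [wronskian, derivative_add, derivative_sub, derivative_mul]
  linear_combination P * (p * hq - q * hp) + p * q * hVU

theorem eq_zero_or_eq_zero_of_gauge_equivalent {z t κ : ι → K} (hz : Function.Injective z)
    {p q V U : K[X]}
    (hp : nodal univ z * derivative (derivative p) +
      partialFractionNumerator z (1 - t - κ) * derivative p + V * p = 0)
    (hq : nodal univ z * derivative (derivative q) +
      partialFractionNumerator z (1 + t - κ) * derivative q + U * q = 0)
    (hVU : nodal univ z * (V - U + derivative (partialFractionNumerator z t)) =
      partialFractionNumerator z t * partialFractionNumerator z κ)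
    (hκ : ∃ i, ∀ n : ℤ, κ i ≠ n) (ht : ∃ i, ∀ n : ℤ, t i ≠ n) : p = 0 ∨ q = 0 := by
  obtain ⟨i, hi⟩ := hκ
  obtain ⟨j, hj⟩ := ht
  set T := partialFractionNumerator z t
  rw [partialFractionNumerator_sub, partialFractionNumerator_sub,
    partialFractionNumerator_one] at hp
  rw [partialFractionNumerator_sub, partialFractionNumerator_add,
    partialFractionNumerator_one] at hq
  set R := nodal univ z * wronskian p q + p * q * T
  have hR₀ : R = 0 := by
    by_contra hne
    have hW : nodal univ z * wronskian 1 R = 1 * R * partialFractionNumerator z κ := by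
      rw [wronskian, derivative_one, zero_mul, sub_zero, one_mul, one_mul]
      exact mul_derivative_gauged_wronskian hp hq hVU
    exact hi (R.rootMultiplicity (z i) - (1 : K[X]).rootMultiplicity (z i))
      (mod_cast eq_rootMultiplicity_sub_of_nodal_mul_wronskian hz one_ne_zero hne hW i)
  by_contra! hpq
  have hW : nodal univ z * wronskian q p = q * p * T := by
    rw [← wronskian_neg_eq]
    linear_combination -hR₀
  exact hj (p.rootMultiplicity (z j) - q.rootMultiplicity (z j))
    (mod_cast eq_rootMultiplicity_sub_of_nodal_mul_wronskian hz hpq.2 hpq.1 hW j)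

end PartialFractions

section HeunOperator

open Finset Lagrange

/-- The differential operator `Y ↦ Π Y'' + (∑ i, γ i ∏_{j ≠ i} (X - z j)) Y' + (k X - q) Y`, with
`Π = ∏ i, (X - z i)`, whose kernel is the space of polynomial solutions of the Heun equation with
finite singular points `z i` of exponents `0` and `1 - γ i`. For exponents `α` and `β` at infinity,
`k = α β`. -/
noncomputable def heunOp {R : Type*} [CommRing R] (z γ : Fin 3 → R) (k q : R) (Y : R[X]) : R[X] :=
  nodal univ z * derivative (derivative Y) + partialFractionNumerator z γ * derivative Y +
    (C k * X - C q) * Y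

theorem nodal_fin_three {R : Type*} [CommRing R] (z : Fin 3 → R) :
    nodal univ z = (X - C (z 0)) * (X - C (z 1)) * (X - C (z 2)) := by
  rw [nodal_eq, Fin.prod_univ_three]

theorem partialFractionNumerator_fin_three {R : Type*} [CommRing R] (z t : Fin 3 → R) :
    partialFractionNumerator z t = C (t 0) * ((X - C (z 1)) * (X - C (z 2))) +
      C (t 1) * ((X - C (z 0)) * (X - C (z 2))) + C (t 2) * ((X - C (z 0)) * (X - C (z 1))) := by
  have h₀ : univ.erase (0 : Fin 3) = {1, 2} := by decide
  have h₁ : univ.erase (1 : Fin 3) = {0, 2} := by decide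
  have h₂ : univ.erase (2 : Fin 3) = {0, 1} := by decide
  simp only [partialFractionNumerator, Fin.sum_univ_three, nodal_eq, h₀, h₁, h₂]
  rw [prod_pair (by decide), prod_pair (by decide), prod_pair (by decide)]

variable {R : Type*} [CommRing R] (z γ : Fin 3 → R) (k q : R) (Y : R[X])

theorem taylor_heunOp (s : R) : taylor s (heunOp z γ k q Y) =
    heunOp (fun i ↦ z i - s) γ k (q - k * s) (taylor s Y) := by
  simp only [heunOp, nodal_fin_three, partialFractionNumerator_fin_three, taylor_apply,
    derivative_comp, add_comp, mul_comp, sub_comp, X_comp, C_comp, derivative_add, derivative_X,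
    derivative_C, add_zero, one_mul, C_sub, C_mul]
  ring

variable {z}

theorem heunOp_eq_sum_X_pow (hz : z 2 = 0) : heunOp z γ k q Y =
    derivative (derivative Y) * X ^ 3 - C (z 0 + z 1) * (derivative (derivative Y) * X ^ 2) +
      C (z 0 * z 1) * (derivative (derivative Y) * X) +
      C (γ 0 + γ 1 + γ 2) * (derivative Y * X ^ 2) -
      C (γ 2 * (z 0 + z 1) + γ 0 * z 1 + γ 1 * z 0) * (derivative Y * X) +
      C (z 0 * z 1 * γ 2) * derivative Y + C k * (Y * X) - C q * Y := by
  simp only [heunOp, nodal_fin_three, partialFractionNumerator_fin_three, hz, C_0, C_mul, C_add]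
  ring

theorem coeff_zero_heunOp (hz : z 2 = 0) :
    (heunOp z γ k q Y).coeff 0 = z 0 * z 1 * γ 2 * Y.coeff 1 - q * Y.coeff 0 := by
  simp only [heunOp_eq_sum_X_pow γ k q Y hz, coeff_add, coeff_sub, coeff_derivative,
    mul_coeff_zero, coeff_X_zero, coeff_X_pow]
  norm_num

theorem coeff_succ_heunOp (hz : z 2 = 0) (m : ℕ) : (heunOp z γ k q Y).coeff (m + 1) =
    z 0 * z 1 * (m + 2) * (m + 1 + γ 2) * Y.coeff (m + 2) -
      ((m + 1) * ((m + γ 2) * (z 0 + z 1) + z 1 * γ 0 + z 0 * γ 1) + q) * Y.coeff (m + 1) +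
      (m * (m - 1) + m * (γ 0 + γ 1 + γ 2) + k) * Y.coeff m := by
  rw [heunOp_eq_sum_X_pow γ k q Y hz]
  rcases m with _ | _ | m
  all_goals
    simp only [coeff_add, coeff_sub, coeff_C_mul, coeff_mul_X, coeff_mul_X_pow', coeff_derivative,
      Nat.add_assoc, Nat.reduceAdd, Nat.reduceSubDiff, Nat.reduceLeDiff, le_add_iff_nonneg_left,
      zero_le, if_true, Nat.add_sub_cancel]
    norm_num
    ring

/-- The operator on polynomials which, for the Weierstrass half-period values `e i`, is conjugate by
`∏ i, (X - e i) ^ a i` to the Treibich–Verdier operator minus the energy `E`, in the coordinate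
`℘`. The exponents at infinity are `a₀ + ∑ i, a i` and `1 / 2 - a₀ + ∑ i, a i`, and the coupling
constants depend on `a₀` and `a i` only through `a₀ (1 / 2 - a₀)` and `a i (1 / 2 - a i)`. -/
noncomputable def treibichVerdierOp (e : Fin 3 → ℝ) (a₀ : ℝ) (a : Fin 3 → ℝ) (E : ℝ) (Y : ℝ[X]) :
    ℝ[X] :=
  heunOp e (fun i ↦ 2 * a i + 1 / 2) ((a₀ + ∑ i, a i) * (-a₀ + 1 / 2 + ∑ i, a i))
    (∑ i, e i * (∑ j, a j - a i) ^ 2 - E / 4) Y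

theorem treibichVerdierOp_swap (e₁ e₂ e₃ a₀ a₁ a₂ a₃ E : ℝ) (Y : ℝ[X]) :
    treibichVerdierOp ![e₁, e₃, e₂] a₀ ![a₁, a₃, a₂] E Y =
      treibichVerdierOp ![e₁, e₂, e₃] a₀ ![a₁, a₂, a₃] E Y := by
  have hsum : a₁ + a₃ + a₂ = a₁ + a₂ + a₃ := by ring
  simp only [treibichVerdierOp, heunOp, nodal_fin_three, partialFractionNumerator_fin_three,
    Fin.sum_univ_three, Matrix.cons_val_zero, Matrix.cons_val_one, Matrix.cons_val, hsum]
  simp only [C_add, C_sub]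
  ring

theorem eq_zero_or_eq_zero_of_treibichVerdierOp_eq_zero {e a b : Fin 3 → ℝ} {a₀ b₀ E : ℝ}
    {p q : ℝ[X]} (he : Function.Injective e) (hp : treibichVerdierOp e a₀ a E p = 0)
    (hq : treibichVerdierOp e b₀ b E q = 0)
    (h₀ : a₀ * (1 / 2 - a₀) = b₀ * (1 / 2 - b₀))
    (h : ∀ i, a i * (1 / 2 - a i) = b i * (1 / 2 - b i))
    (hκ : ∃ i, ∀ n : ℤ, 1 / 2 - a i - b i ≠ n) (ht : ∃ i, ∀ n : ℤ, b i - a i ≠ n) :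
    p = 0 ∨ q = 0 := by
  set t : Fin 3 → ℝ := b - a with ht_def
  set κ : Fin 3 → ℝ := fun i ↦ 1 / 2 - a i - b i with hκ_def
  have hγp : (fun i ↦ 2 * a i + 1 / 2) = 1 - t - κ := by
    ext i; simp only [ht_def, hκ_def, Pi.sub_apply, Pi.one_apply]; ring
  have hγq : (fun i ↦ 2 * b i + 1 / 2) = 1 + t - κ := by
    ext i; simp only [ht_def, hκ_def, Pi.sub_apply, Pi.add_apply, Pi.one_apply]; ring
  rw [treibichVerdierOp, hγp, heunOp] at hp
  rw [treibichVerdierOp, hγq, heunOp] at hq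
  refine eq_zero_or_eq_zero_of_gauge_equivalent he hp hq ?_ hκ ht
  refine Polynomial.funext fun x ↦ ?_
  simp only [nodal_fin_three, partialFractionNumerator_fin_three, Fin.sum_univ_three, ht_def,
    hκ_def, Pi.sub_apply, derivative_add, derivative_sub, derivative_mul, derivative_C,
    derivative_X, eval_add, eval_sub, eval_mul, eval_C, eval_X, zero_mul, zero_add, sub_zero,
    one_mul, mul_one]
  linear_combination
    h 0 * ((x - e 1) * (x - e 2)) ^ 2 + h 1 * ((x - e 0) * (x - e 2)) ^ 2 +
    h 2 * ((x - e 0) * (x - e 1)) ^ 2 - (x - e 0) * (x - e 1) * (x - e 2) *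
      ((h 0 + h 1) * (x - e 2) + (h 0 + h 2) * (x - e 1) + (h 1 + h 2) * (x - e 0) -
        x * (h₀ + h 0 + h 1 + h 2))

end HeunOperator

section HeunC

variable (e1 e2 e3 a0 a1 a2 a3 : ℝ)

/-- The superdiagonal of the Jacobi matrix in `E` for which `heunC` is the sequence of local Heun
coefficients at `e3`. -/
noncomputable def heunUpper (m : ℕ) : ℝ :=
  -4 * ((e1 - e3) * (e2 - e3)) * (m + 1) * (m + (2 * a3 + 1 / 2))

/-- The diagonal of the Jacobi matrix associated with `heunC`. -/
noncomputable def heunDiag (m : ℕ) : ℝ :=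
  4 * (m * ((m - 1 + (2 * a3 + 1 / 2)) * (e1 + e2 - 2 * e3) + (e2 - e3) * (2 * a1 + 1 / 2) +
    (e1 - e3) * (2 * a2 + 1 / 2)) + (heunQE e1 e2 e3 a0 a1 a2 a3).eval 0)

/-- The subdiagonal of the Jacobi matrix associated with `heunC`: `heunLower m` sits in column
`m`, row `m + 1`. -/
noncomputable def heunLower (m : ℕ) : ℝ :=
  -4 * (m + (a0 + a1 + a2 + a3)) * (m + (-a0 + 1 / 2 + a1 + a2 + a3))

theorem eval_heunQE (E : ℝ) : (heunQE e1 e2 e3 a0 a1 a2 a3).eval E =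
    e1 * (a2 + a3) ^ 2 + e2 * (a1 + a3) ^ 2 + e3 * (a1 + a2) ^ 2 -
      e3 * ((a0 + a1 + a2 + a3) * (-a0 + 1 / 2 + a1 + a2 + a3)) - E / 4 := by
  simp only [heunQE, eval_sub, eval_C, eval_C_mul, eval_X]
  ring

theorem heunC_symm : heunC e1 e2 e3 a0 a1 a2 a3 = heunC e2 e1 e3 a0 a2 a1 a3 := by
  have hq : heunQE e1 e2 e3 a0 a1 a2 a3 = heunQE e2 e1 e3 a0 a2 a1 a3 := by
    refine Polynomial.funext fun E ↦ ?_
    simp only [eval_heunQE]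
    ring
  funext m
  induction m using Nat.twoStepInduction with
  | zero => simp only [heunC]
  | one => simp only [heunC, hq, mul_comm (e1 - e3)]
  | more m ih₀ ih₁ =>
    simp only [heunC, hq, ih₀, ih₁]
    ring_nf

variable {e1 e2 e3 a0 a1 a2 a3}

theorem heunUpper_ne_zero (h1 : e1 ≠ e3) (h2 : e2 ≠ e3)
    (hγ : ∀ m : ℕ, (m : ℝ) + (2 * a3 + 1 / 2) ≠ 0) (m : ℕ) : heunUpper e1 e2 e3 a3 m ≠ 0 :=
  mul_ne_zero (mul_ne_zero (mul_ne_zero (by norm_num) (mul_ne_zero (sub_ne_zero.2 h1)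
    (sub_ne_zero.2 h2))) m.cast_add_one_ne_zero) (hγ m)

theorem isJacobiSystem_heunC (h1 : e1 ≠ e3) (h2 : e2 ≠ e3)
    (hγ : ∀ m : ℕ, (m : ℝ) + (2 * a3 + 1 / 2) ≠ 0) :
    IsJacobiSystem (heunC e1 e2 e3 a0 a1 a2 a3) (heunUpper e1 e2 e3 a3)
      (heunDiag e1 e2 e3 a0 a1 a2 a3) (heunLower a0 a1 a2 a3) where
  zero := by rw [heunC]
  one := by
    have hA : (e1 - e3) * (e2 - e3) * (2 * a3 + 1 / 2) ≠ 0 :=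
      mul_ne_zero (mul_ne_zero (sub_ne_zero.2 h1) (sub_ne_zero.2 h2)) (by simpa using hγ 0)
    refine Polynomial.funext fun E ↦ ?_
    have hc : (e1 - e3) * (e2 - e3) * (2 * a3 + 1 / 2) * (heunC e1 e2 e3 a0 a1 a2 a3 1).eval E =
        (heunQE e1 e2 e3 a0 a1 a2 a3).eval E := by
      rw [heunC, eval_C_mul, mul_inv_cancel_left₀ hA]
    rw [eval_heunQE] at hc
    simp only [heunUpper, heunDiag, eval_X, eval_add, eval_C_mul, eval_C, eval_heunQE]
    push_cast
    linear_combination 4 * hc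
  add_two m := by
    have hA : (e1 - e3) * (e2 - e3) * ((m : ℝ) + 2) * ((m : ℝ) + 1 + (2 * a3 + 1 / 2)) ≠ 0 :=
      mul_ne_zero (mul_ne_zero (mul_ne_zero (sub_ne_zero.2 h1) (sub_ne_zero.2 h2)) (by positivity))
        (by exact_mod_cast hγ (m + 1))
    refine Polynomial.funext fun E ↦ ?_
    have hc := congrArg (eval E) (heunC.eq_3 e1 e2 e3 a0 a1 a2 a3 m)
    rw [eval_C_mul, ← div_eq_inv_mul, eq_div_iff hA] at hc
    simp only [eval_add, eval_mul, eval_C, eval_heunQE] at hc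
    simp only [heunUpper, heunDiag, heunLower, eval_X, eval_add, eval_mul, eval_C, eval_heunQE]
    push_cast
    linear_combination 4 * hc

/-- The Euler-type transformation exchanges `γ₃ = 2 ã₃ + 1 / 2` with `β`; this leaves the diagonal
of the Jacobi matrix and the products of its off-diagonal entries unchanged. -/
theorem associated_heunC_euler {h : ℝ} (h1 : e1 ≠ e3) (h2 : e2 ≠ e3)
    (hγ : ∀ m : ℕ, (m : ℝ) + (2 * a3 + 1 / 2) ≠ 0)
    (hβ : ∀ m : ℕ, (m : ℝ) + (-a0 + 1 / 2 + a1 + a2 + a3) ≠ 0)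
    (hh : 2 * h = a1 + a2 - a0 - a3) (n : ℕ) :
    Associated (heunC e1 e2 e3 a0 a1 a2 a3 n)
      (heunC e1 e2 e3 (a0 + h) (a1 - h) (a2 - h) (a3 + h) n) := by
  obtain rfl : h = (a1 + a2 - a0 - a3) / 2 := by linear_combination hh / 2
  have hγ' (m : ℕ) : (m : ℝ) + (2 * (a3 + (a1 + a2 - a0 - a3) / 2) + 1 / 2) ≠ 0 := by
    convert hβ m using 1; ring
  have hdiag : heunDiag e1 e2 e3 (a0 + (a1 + a2 - a0 - a3) / 2) (a1 - (a1 + a2 - a0 - a3) / 2)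
      (a2 - (a1 + a2 - a0 - a3) / 2) (a3 + (a1 + a2 - a0 - a3) / 2) =
      heunDiag e1 e2 e3 a0 a1 a2 a3 := by
    funext m
    simp only [heunDiag, eval_heunQE]
    ring
  refine (isJacobiSystem_heunC h1 h2 hγ).associated (hdiag ▸ isJacobiSystem_heunC h1 h2 hγ')
    (heunUpper_ne_zero h1 h2 hγ) (heunUpper_ne_zero h1 h2 hγ') (fun m ↦ ?_) n
  simp only [heunUpper, heunLower]
  ring

theorem splits_and_separable_heunC (hA : (e1 - e3) * (e2 - e3) < 0) {n : ℕ}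
    (hn : a0 + a1 + a2 + a3 = 1 - n) (hγ : ∀ m : ℕ, (m : ℝ) + (2 * a3 + 1 / 2) ≠ 0)
    (hγβ : ∀ m : ℕ, m + 1 < n →
      0 < ((m : ℝ) + (2 * a3 + 1 / 2)) * (m + (-a0 + 1 / 2 + a1 + a2 + a3))) :
    (heunC e1 e2 e3 a0 a1 a2 a3 n).Splits ∧ (heunC e1 e2 e3 a0 a1 a2 a3 n).Separable := by
  have h1 : e1 ≠ e3 := sub_ne_zero.1 (left_ne_zero_of_mul hA.ne)
  have h2 : e2 ≠ e3 := sub_ne_zero.1 (right_ne_zero_of_mul hA.ne)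
  have hsys := isJacobiSystem_heunC (a0 := a0) (a1 := a1) (a2 := a2) h1 h2 hγ
  have hpos (m : ℕ) (hm : m + 1 < n) : 0 < heunLower a0 a1 a2 a3 m * heunUpper e1 e2 e3 a3 m := by
    have hmn : (m : ℝ) + 1 < n := mod_cast hm
    rw [heunLower, heunUpper, hn]
    calc
      0 < 16 * ((m + 1) * (n - 1 - m)) * -((e1 - e3) * (e2 - e3)) *
          (((m : ℝ) + (2 * a3 + 1 / 2)) * (m + (-a0 + 1 / 2 + a1 + a2 + a3))) :=
        mul_pos (mul_pos (mul_pos (by norm_num) (mul_pos (by positivity) (by linarith)))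
          (neg_pos.2 hA)) (hγβ m hm)
      _ = _ := by ring
  exact ⟨hsys.splits hpos, hsys.separable hpos⟩

theorem taylor_treibichVerdierOp (E : ℝ) (Y : ℝ[X]) :
    taylor e3 (treibichVerdierOp ![e1, e2, e3] a0 ![a1, a2, a3] E Y) =
      heunOp ![e1 - e3, e2 - e3, 0] ![2 * a1 + 1 / 2, 2 * a2 + 1 / 2, 2 * a3 + 1 / 2]
        ((a0 + a1 + a2 + a3) * (-a0 + 1 / 2 + a1 + a2 + a3))
        ((heunQE e1 e2 e3 a0 a1 a2 a3).eval E) (taylor e3 Y) := by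
  rw [treibichVerdierOp, taylor_heunOp]
  congr 1
  · ext i; fin_cases i <;> simp
  · ext i; fin_cases i <;> simp
  · simp only [Fin.sum_univ_three, Matrix.cons_val_zero, Matrix.cons_val_one, Matrix.cons_val]
    ring
  · simp only [Fin.sum_univ_three, Matrix.cons_val_zero, Matrix.cons_val_one, Matrix.cons_val,
      eval_heunQE]
    ring

theorem treibichVerdierOp_eq_zero_iff {E : ℝ} {Y : ℝ[X]} :
    treibichVerdierOp ![e1, e2, e3] a0 ![a1, a2, a3] E Y = 0 ↔
      IsJacobiEigenvector (heunUpper e1 e2 e3 a3) (heunDiag e1 e2 e3 a0 a1 a2 a3)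
        (heunLower a0 a1 a2 a3) E (taylor e3 Y).coeff := by
  have hz : ![e1 - e3, e2 - e3, 0] 2 = 0 := rfl
  rw [← map_eq_zero_iff (taylor e3) (taylor_injective e3), taylor_treibichVerdierOp]
  set y := (taylor e3 Y).coeff with hy
  set Z := heunOp ![e1 - e3, e2 - e3, 0] _ _ _ (taylor e3 Y) with hZ
  have hzero : 4 * Z.coeff 0 =
      E * y 0 - (heunUpper e1 e2 e3 a3 0 * y 1 + heunDiag e1 e2 e3 a0 a1 a2 a3 0 * y 0) := by
    rw [hZ, coeff_zero_heunOp _ _ _ _ hz, ← hy]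
    simp only [Matrix.cons_val_zero, Matrix.cons_val_one, Matrix.cons_val, heunUpper, heunDiag,
      eval_heunQE, Nat.cast_zero]
    ring
  have hsucc (m : ℕ) : 4 * Z.coeff (m + 1) = E * y (m + 1) -
      (heunUpper e1 e2 e3 a3 (m + 1) * y (m + 2) +
        heunDiag e1 e2 e3 a0 a1 a2 a3 (m + 1) * y (m + 1) + heunLower a0 a1 a2 a3 m * y m) := by
    rw [hZ, coeff_succ_heunOp _ _ _ _ hz, ← hy]
    simp only [Matrix.cons_val_zero, Matrix.cons_val_one, Matrix.cons_val, heunUpper, heunDiag,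
      heunLower, eval_heunQE, Nat.cast_succ]
    ring
  constructor
  · intro h
    simp only [h, coeff_zero, mul_zero] at hzero hsucc
    exact ⟨sub_eq_zero.1 hzero.symm, fun m ↦ sub_eq_zero.1 (hsucc m).symm⟩
  · rintro ⟨h₀, h₁⟩
    ext m
    rcases m with _ | m
    · simpa only [coeff_zero, h₀, sub_self, mul_eq_zero, OfNat.ofNat_ne_zero, false_or]
        using hzero
    · simpa only [coeff_zero, h₁, sub_self, mul_eq_zero, OfNat.ofNat_ne_zero, false_or]
        using hsucc m

theorem eval_heunC_eq_zero_iff (h1 : e1 ≠ e3) (h2 : e2 ≠ e3)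
    (hγ : ∀ m : ℕ, (m : ℝ) + (2 * a3 + 1 / 2) ≠ 0) {n : ℕ} (hn : a0 + a1 + a2 + a3 = 1 - n)
    {E : ℝ} : (heunC e1 e2 e3 a0 a1 a2 a3 n).eval E = 0 ↔
      ∃ Y : ℝ[X], Y ≠ 0 ∧ Y.degree < n ∧
        treibichVerdierOp ![e1, e2, e3] a0 ![a1, a2, a3] E Y = 0 := by
  have hd (m : ℕ) (hm : m + 1 = n) : heunLower a0 a1 a2 a3 m = 0 := by
    rw [heunLower, hn, ← hm, Nat.cast_succ]
    ring
  have hsurj : Function.Surjective (taylor e3) := (taylorEquiv e3).surjective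
  rw [(isJacobiSystem_heunC h1 h2 hγ).eval_eq_zero_iff_exists_polynomial
    (heunUpper_ne_zero h1 h2 hγ) hd, hsurj.exists]
  simp only [treibichVerdierOp_eq_zero_iff, degree_taylor, ne_eq,
    map_eq_zero_iff _ (taylor_injective e3)]

theorem associated_heunC_swap (h1 : e1 ≠ e3) (h2 : e2 ≠ e3) (h12 : e1 ≠ e2)
    (hγ3 : ∀ m : ℕ, (m : ℝ) + (2 * a3 + 1 / 2) ≠ 0)
    (hγ2 : ∀ m : ℕ, (m : ℝ) + (2 * a2 + 1 / 2) ≠ 0) {n : ℕ}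
    (hn : a0 + a1 + a2 + a3 = 1 - n) (hs : (heunC e1 e3 e2 a0 a1 a3 a2 n).Splits)
    (hsep : (heunC e1 e3 e2 a0 a1 a3 a2 n).Separable) :
    Associated (heunC e1 e3 e2 a0 a1 a3 a2 n) (heunC e1 e2 e3 a0 a1 a2 a3 n) := by
  have hn' : a0 + a1 + a3 + a2 = 1 - n := by rw [← hn]; ring
  have hdeg : (heunC e1 e3 e2 a0 a1 a3 a2 n).degree = n :=
    (isJacobiSystem_heunC h12 h2.symm hγ2).degree_eq (heunUpper_ne_zero h12 h2.symm hγ2) n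
  have hdeg' : (heunC e1 e2 e3 a0 a1 a2 a3 n).degree = n :=
    (isJacobiSystem_heunC h1 h2 hγ3).degree_eq (heunUpper_ne_zero h1 h2 hγ3) n
  have hne' : heunC e1 e2 e3 a0 a1 a2 a3 n ≠ 0 := fun h ↦ by simp [h] at hdeg'
  refine associated_of_dvd_of_degree_eq (hs.dvd_of_roots_le_roots hsep.ne_zero ?_)
    (hdeg.trans hdeg'.symm)
  rw [Multiset.le_iff_subset (nodup_roots hsep)]
  intro E hE
  rw [mem_roots hsep.ne_zero, IsRoot, eval_heunC_eq_zero_iff h12 h2.symm hγ2 hn'] at hE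
  rw [mem_roots hne', IsRoot, eval_heunC_eq_zero_iff h1 h2 hγ3 hn]
  simpa only [treibichVerdierOp_swap] using hE

theorem splits_and_separable_heunC_of_euler (hA : (e1 - e3) * (e2 - e3) < 0) {n : ℕ}
    (hn : a0 + a1 + a2 + a3 = 1 - n) (hγ2 : ∀ m : ℕ, (m : ℝ) + (2 * a2 + 1 / 2) ≠ 0)
    (hγ3 : ∀ m : ℕ, (m : ℝ) + (2 * a3 + 1 / 2) ≠ 0)
    (hβ : ∀ m : ℕ, (m : ℝ) + (-a0 + 1 / 2 + a1 + a2 + a3) ≠ 0)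
    (hγ3' : ∀ m : ℕ, (m : ℝ) + (a0 - a1 + a2 + a3 + 1 / 2) ≠ 0)
    (hpos : ∀ m : ℕ, m + 1 < n →
      0 < ((m : ℝ) + (2 * a2 + 1 / 2)) * (m + (a0 - a1 + a2 + a3 + 1 / 2))) :
    (heunC e1 e2 e3 a0 a1 a2 a3 n).Splits ∧ (heunC e1 e2 e3 a0 a1 a2 a3 n).Separable := by
  have h1 : e1 ≠ e3 := sub_ne_zero.1 (left_ne_zero_of_mul hA.ne)
  have h2 : e2 ≠ e3 := sub_ne_zero.1 (right_ne_zero_of_mul hA.ne)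
  have h12 : e1 ≠ e2 := by
    rintro rfl
    exact hA.not_ge (mul_self_nonneg _)
  set h := (a1 + a3 - a0 - a2) / 2 with hh
  have hγ2h (m : ℕ) : (m : ℝ) + (2 * (a2 + h) + 1 / 2) ≠ 0 := by convert hβ m using 1; ring
  have hγ3h (m : ℕ) : (m : ℝ) + (2 * (a3 - h) + 1 / 2) ≠ 0 := by convert hγ3' m using 1; ring
  have hnh : a0 + h + (a1 - h) + (a3 - h) + (a2 + h) = 1 - n := by rw [← hn]; ring
  have hshift : (heunC e1 e2 e3 (a0 + h) (a1 - h) (a2 + h) (a3 - h) n).Splits ∧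
      (heunC e1 e2 e3 (a0 + h) (a1 - h) (a2 + h) (a3 - h) n).Separable := by
    refine splits_and_separable_heunC hA (by rw [← hn]; ring) hγ3h fun m hm ↦ ?_
    convert hpos m hm using 1
    ring
  have hshift_swap := splits_and_separable_of_associated
    (associated_heunC_swap h12 h2.symm h1 hγ2h hγ3h hnh hshift.1 hshift.2) hshift
  have heuler : Associated (heunC e1 e3 e2 a0 a1 a3 a2 n)
      (heunC e1 e3 e2 (a0 + h) (a1 - h) (a3 - h) (a2 + h) n) :=
    associated_heunC_euler h12 h2.symm hγ2 (fun m ↦ by convert hβ m using 1; ring)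
      (by rw [hh]; ring) n
  have hswap := splits_and_separable_of_associated heuler.symm hshift_swap
  exact splits_and_separable_of_associated
    (associated_heunC_swap h1 h2 h12 hγ3 hγ2 hn hswap.1 hswap.2) hswap

end HeunC

section Exponents

theorem natCast_add_ne_zero {x : ℝ} (hx : ∀ n : ℤ, x ≠ n) (m : ℕ) : (m : ℝ) + x ≠ 0 :=
  fun h ↦ hx (-m) (by push_cast; linear_combination h)

theorem intCast_add_half_ne_intCast (k n : ℤ) : (k : ℝ) + 1 / 2 ≠ n := by
  intro h
  have h_real : 2 * (k : ℝ) + 1 = 2 * n := by linear_combination 2 * h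
  have h_int : 2 * k + 1 = 2 * n := mod_cast h_real
  omega

/-- The exponents `ã j` of the `i`-th Heun equation in the odd case of the spectral polynomial with
coupling constants `l`: the two solutions of `ã (1 / 2 - ã) = -l j (l j + 1) / 4` are
`(l j + 1) / 2`, taken at `j = i`, and `-l j / 2`, taken elsewhere. -/
noncomputable def spectralExponent (l : Fin 4 → ℕ) (i j : Fin 4) : ℝ :=
  if j = i then ((l j : ℝ) + 1) / 2 else -(l j : ℝ) / 2

variable (l : Fin 4 → ℕ)

theorem spectralExponent_self (i : Fin 4) : spectralExponent l i i = ((l i : ℝ) + 1) / 2 :=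
  if_pos rfl

theorem spectralExponent_of_ne {i j : Fin 4} (h : j ≠ i) :
    spectralExponent l i j = -(l j : ℝ) / 2 :=
  if_neg h

theorem spectralExponent_mul_half_sub_spectralExponent (i j : Fin 4) :
    spectralExponent l i j * (1 / 2 - spectralExponent l i j) = -((l j : ℝ) * (l j + 1)) / 4 := by
  unfold spectralExponent
  split_ifs <;> ring

theorem two_mul_spectralExponent_add_half_ne_intCast (i j : Fin 4) (n : ℤ) :
    2 * spectralExponent l i j + 1 / 2 ≠ n := by
  unfold spectralExponent
  split_ifs
  · convert intCast_add_half_ne_intCast (l j + 1) n using 1; push_cast; ring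
  · convert intCast_add_half_ne_intCast (-l j) n using 1; push_cast; ring

theorem exists_half_sub_spectralExponent_sub_ne_intCast (i j : Fin 4) :
    ∃ k : Fin 3, ∀ n : ℤ,
      1 / 2 - spectralExponent l i k.succ - spectralExponent l j k.succ ≠ n := by
  obtain ⟨k, hki, hkj⟩ : ∃ k : Fin 3, k.succ ≠ i ∧ k.succ ≠ j := by decide +revert
  refine ⟨k, fun n ↦ ?_⟩
  rw [spectralExponent_of_ne l hki, spectralExponent_of_ne l hkj]
  convert intCast_add_half_ne_intCast (l k.succ) n using 1
  push_cast; ring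

theorem exists_spectralExponent_sub_spectralExponent_ne_intCast {i j : Fin 4} (hij : i ≠ j) :
    ∃ k : Fin 3, ∀ n : ℤ, spectralExponent l j k.succ - spectralExponent l i k.succ ≠ n := by
  have hk : ∀ i j : Fin 4, i ≠ j →
      ∃ k : Fin 3, k.succ = i ∧ k.succ ≠ j ∨ k.succ = j ∧ k.succ ≠ i := by decide
  obtain ⟨k, ⟨rfl, hk⟩ | ⟨rfl, hk⟩⟩ := hk i j hij
  · refine ⟨k, fun n ↦ ?_⟩
    rw [spectralExponent_self, spectralExponent_of_ne l hk]
    convert intCast_add_half_ne_intCast (-l k.succ - 1) n using 1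
    push_cast; ring
  · refine ⟨k, fun n ↦ ?_⟩
    rw [spectralExponent_self, spectralExponent_of_ne l hk]
    convert intCast_add_half_ne_intCast (l k.succ) n using 1
    push_cast; ring

end Exponents

section SpectralFactors

variable {e1 e2 e3 : ℝ} {l : Fin 4 → ℕ}

/-- The `i`-th factor of the spectral polynomial, up to normalization, when
`l 0 + l 3 + 1 = l 1 + l 2`; the listed degrees are `1 - ∑ j, spectralExponent l i j`. -/
noncomputable def spectralFactor (e1 e2 e3 : ℝ) (l : Fin 4 → ℕ) (i : Fin 4) : ℝ[X] :=
  heunC e1 e2 e3 (spectralExponent l i 0) (spectralExponent l i 1) (spectralExponent l i 2)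
    (spectralExponent l i 3) (![l 3 + 1, l 2, l 1, l 0 + 1] i)

theorem sum_spectralExponent (hl : l 0 + l 3 + 1 = l 1 + l 2) (i : Fin 4) :
    spectralExponent l i 0 + spectralExponent l i 1 + spectralExponent l i 2 +
      spectralExponent l i 3 = 1 - (![l 3 + 1, l 2, l 1, l 0 + 1] i : ℕ) := by
  have hl' : (l 0 : ℝ) + l 3 + 1 = l 1 + l 2 := mod_cast hl
  fin_cases i <;>
    simp only [spectralExponent, Fin.reduceFinMk, Fin.reduceEq, if_true, if_false,
      Matrix.cons_val, Nat.cast_succ] <;>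
    linarith

theorem exists_treibichVerdierOp_eq_zero (hl : l 0 + l 3 + 1 = l 1 + l 2) (h1 : e1 ≠ e3)
    (h2 : e2 ≠ e3) {i : Fin 4} {E : ℝ} (hE : (spectralFactor e1 e2 e3 l i).eval E = 0) :
    ∃ Y ≠ 0, treibichVerdierOp ![e1, e2, e3] (spectralExponent l i 0)
      (fun k ↦ spectralExponent l i k.succ) E Y = 0 := by
  obtain ⟨Y, hY, -, hY0⟩ := (eval_heunC_eq_zero_iff h1 h2
    (natCast_add_ne_zero (two_mul_spectralExponent_add_half_ne_intCast l i 3))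
    (sum_spectralExponent hl i)).1 hE
  refine ⟨Y, hY, ?_⟩
  convert hY0 using 2
  ext k
  fin_cases k <;> rfl

theorem eval_spectralFactor_ne_zero (hl : l 0 + l 3 + 1 = l 1 + l 2)
    (h1 : e1 ≠ e3) (h2 : e2 ≠ e3) (h12 : e1 ≠ e2) {i j : Fin 4} (hij : i ≠ j) {E : ℝ}
    (hi : (spectralFactor e1 e2 e3 l i).eval E = 0) :
    (spectralFactor e1 e2 e3 l j).eval E ≠ 0 := by
  intro hj
  obtain ⟨p, hp, hpE⟩ := exists_treibichVerdierOp_eq_zero hl h1 h2 hi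
  obtain ⟨q, hq, hqE⟩ := exists_treibichVerdierOp_eq_zero hl h1 h2 hj
  have he : Function.Injective ![e1, e2, e3] := by
    intro k m
    fin_cases k <;> fin_cases m <;> simp [h1, h2, h12, h1.symm, h2.symm, h12.symm]
  rcases eq_zero_or_eq_zero_of_treibichVerdierOp_eq_zero he hpE hqE
    (by simp only [spectralExponent_mul_half_sub_spectralExponent])
    (fun k ↦ by simp only [spectralExponent_mul_half_sub_spectralExponent])
    (exists_half_sub_spectralExponent_sub_ne_intCast l i j)
    (exists_spectralExponent_sub_spectralExponent_ne_intCast l hij) with h | h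
  exacts [hp h, hq h]

theorem splits_and_separable_spectralFactor_zero (hl : l 0 + l 3 + 1 = l 1 + l 2)
    (hA : (e1 - e3) * (e2 - e3) < 0) :
    (spectralFactor e1 e2 e3 l 0).Splits ∧ (spectralFactor e1 e2 e3 l 0).Separable := by
  have hsum : spectralExponent l 0 0 + spectralExponent l 0 1 + spectralExponent l 0 2 +
      spectralExponent l 0 3 = 1 - (l 3 + 1 : ℕ) := sum_spectralExponent hl 0
  refine splits_and_separable_heunC hA hsum
    (natCast_add_ne_zero (two_mul_spectralExponent_add_half_ne_intCast l 0 3)) fun m hm ↦ ?_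
  have hm' : (m : ℝ) + 1 ≤ l 3 := mod_cast Nat.lt_succ_iff.1 hm
  have h0 : spectralExponent l 0 0 = ((l 0 : ℝ) + 1) / 2 := spectralExponent_self l 0
  have h3 : spectralExponent l 0 3 = -(l 3 : ℝ) / 2 := spectralExponent_of_ne l (by decide)
  have : (0 : ℝ) ≤ l 0 := Nat.cast_nonneg _
  push_cast at hsum
  exact mul_pos_of_neg_of_neg (by linarith) (by linarith)

theorem splits_and_separable_spectralFactor_three (hl : l 0 + l 3 + 1 = l 1 + l 2)
    (hA : (e1 - e3) * (e2 - e3) < 0) :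
    (spectralFactor e1 e2 e3 l 3).Splits ∧ (spectralFactor e1 e2 e3 l 3).Separable := by
  have hsum : spectralExponent l 3 0 + spectralExponent l 3 1 + spectralExponent l 3 2 +
      spectralExponent l 3 3 = 1 - (l 0 + 1 : ℕ) := sum_spectralExponent hl 3
  refine splits_and_separable_heunC hA hsum
    (natCast_add_ne_zero (two_mul_spectralExponent_add_half_ne_intCast l 3 3)) fun m _ ↦ ?_
  have h0 : spectralExponent l 3 0 = -(l 0 : ℝ) / 2 := spectralExponent_of_ne l (by decide)
  have h3 : spectralExponent l 3 3 = ((l 3 : ℝ) + 1) / 2 := spectralExponent_self l 3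
  have : (0 : ℝ) ≤ l 3 := Nat.cast_nonneg _
  have : (0 : ℝ) ≤ m := Nat.cast_nonneg _
  push_cast at hsum
  exact mul_pos (by linarith) (by linarith)

theorem splits_and_separable_spectralFactor_one (hl : l 0 + l 3 + 1 = l 1 + l 2)
    (hA : (e1 - e3) * (e2 - e3) < 0) :
    (spectralFactor e1 e2 e3 l 1).Splits ∧ (spectralFactor e1 e2 e3 l 1).Separable := by
  have hsum : spectralExponent l 1 0 + spectralExponent l 1 1 + spectralExponent l 1 2 +
      spectralExponent l 1 3 = 1 - (l 2 : ℕ) := sum_spectralExponent hl 1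
  have h0 : spectralExponent l 1 0 = -(l 0 : ℝ) / 2 := spectralExponent_of_ne l (by decide)
  have h1 : spectralExponent l 1 1 = ((l 1 : ℝ) + 1) / 2 := spectralExponent_self l 1
  have h2 : spectralExponent l 1 2 = -(l 2 : ℝ) / 2 := spectralExponent_of_ne l (by decide)
  refine splits_and_separable_heunC_of_euler hA hsum
    (natCast_add_ne_zero (two_mul_spectralExponent_add_half_ne_intCast l 1 2))
    (natCast_add_ne_zero (two_mul_spectralExponent_add_half_ne_intCast l 1 3))
    (natCast_add_ne_zero fun n ↦ ?_) (natCast_add_ne_zero fun n ↦ ?_) fun m hm ↦ ?_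
  · convert intCast_add_half_ne_intCast (l 0 - l 2 + 1) n using 1
    push_cast
    linear_combination hsum - 2 * h0
  · convert intCast_add_half_ne_intCast (-l 1 - l 2) n using 1
    push_cast
    linear_combination hsum - 2 * h1
  · have hm' : (m : ℝ) + 1 ≤ l 2 := mod_cast (show m + 1 < l 2 from hm).le
    have : (0 : ℝ) ≤ l 1 := Nat.cast_nonneg _
    exact mul_pos_of_neg_of_neg (by linarith) (by linarith)

theorem spectralFactor_swap (i : Fin 4) :
    spectralFactor e2 e1 e3 (l ∘ Equiv.swap 1 2) (Equiv.swap 1 2 i) =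
      spectralFactor e1 e2 e3 l i := by
  have hexp (j : Fin 4) : spectralExponent (l ∘ Equiv.swap 1 2) (Equiv.swap 1 2 i) j =
      spectralExponent l i (Equiv.swap 1 2 j) := by
    simp only [spectralExponent, Function.comp_apply, Equiv.swap_apply_eq_iff]
  rw [spectralFactor, spectralFactor, heunC_symm]
  simp only [hexp]
  fin_cases i <;> rfl

theorem splits_and_separable_spectralFactor (hl : l 0 + l 3 + 1 = l 1 + l 2)
    (hA : (e1 - e3) * (e2 - e3) < 0) (i : Fin 4) :
    (spectralFactor e1 e2 e3 l i).Splits ∧ (spectralFactor e1 e2 e3 l i).Separable := by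
  fin_cases i
  · exact splits_and_separable_spectralFactor_zero hl hA
  · exact splits_and_separable_spectralFactor_one hl hA
  · rw [← spectralFactor_swap]
    exact splits_and_separable_spectralFactor_one (hl.trans (add_comm _ _))
      (mul_comm (e1 - e3) _ ▸ hA)
  · exact splits_and_separable_spectralFactor_three hl hA

theorem splits_and_separable_prod_spectralFactor (hl : l 0 + l 3 + 1 = l 1 + l 2)
    (hA : (e1 - e3) * (e2 - e3) < 0) :
    (∏ i, spectralFactor e1 e2 e3 l i).Splits ∧ (∏ i, spectralFactor e1 e2 e3 l i).Separable := by
  have hfac := splits_and_separable_spectralFactor hl hA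
  refine ⟨Splits.prod fun i _ ↦ (hfac i).1, separable_prod (fun i j hij ↦ ?_) fun i ↦ (hfac i).2⟩
  have h12 : e1 ≠ e2 := by
    rintro rfl
    exact hA.not_ge (mul_self_nonneg _)
  exact isCoprime_of_splits_of_eval_ne_zero (hfac i).1 (hfac i).2.ne_zero fun E ↦
    eval_spectralFactor_ne_zero hl (sub_ne_zero.1 (left_ne_zero_of_mul hA.ne))
      (sub_ne_zero.1 (right_ne_zero_of_mul hA.ne)) h12 hij

theorem specP_dvd_heunC (e1 e2 e3 a0 a1 a2 a3 : ℝ) (N : ℕ) :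
    specP e1 e2 e3 a0 a1 a2 a3 N ∣ heunC e1 e2 e3 a0 a1 a2 a3 (N + 1) := by
  rcases eq_or_ne (heunC e1 e2 e3 a0 a1 a2 a3 (N + 1)) 0 with h | h
  · rw [h]
    exact dvd_zero _
  · rw [specP]
    exact (C_mul_dvd (inv_ne_zero (leadingCoeff_ne_zero.2 h))).2 dvd_rfl

theorem specQ_dvd_prod_spectralFactor {l0 l1 l2 l3 : ℕ} (hl : l0 + l3 + 1 = l1 + l2) :
    specQ e1 e2 e3 l0 l1 l2 l3 ∣ ∏ i, spectralFactor e1 e2 e3 ![l0, l1, l2, l3] i := by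
  rw [specQ, Fin.prod_univ_four]
  have hodd : ¬(l0 + l1 + l2 + l3) % 2 = 0 := by omega
  refine mul_dvd_mul (mul_dvd_mul (mul_dvd_mul ?_ ?_) ?_) ?_
  · rw [specP0, if_neg hodd, if_neg (by omega), if_neg (by omega),
      show (l1 + l2 + l3 - l0 - 1) / 2 = l3 by omega]
    exact specP_dvd_heunC ..
  · rw [specP1, if_neg hodd, if_neg (by omega)]
    split_ifs with h
    · exact one_dvd _
    · obtain ⟨k, rfl⟩ : ∃ k, l2 = k + 1 := ⟨l2 - 1, by omega⟩
      rw [show (l0 + (k + 1) + l3 - l1 - 1) / 2 = k by omega]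
      exact specP_dvd_heunC ..
  · rw [specP2, if_neg hodd, if_neg (by omega)]
    split_ifs with h
    · exact one_dvd _
    · obtain ⟨k, rfl⟩ : ∃ k, l1 = k + 1 := ⟨l1 - 1, by omega⟩
      rw [show (l0 + (k + 1) + l3 - l2 - 1) / 2 = k by omega]
      exact specP_dvd_heunC ..
  · rw [specP3, if_neg hodd, if_neg (by omega), if_neg (by omega),
      show (l0 + l1 + l2 - l3 - 1) / 2 = l0 by omega]
    exact specP_dvd_heunC ..

theorem map_complex_roots_nodup_and_real {p : ℝ[X]} (hp : p.Splits) (hsep : p.Separable) :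
    p.map (algebraMap ℝ ℂ) ≠ 0 ∧ (p.map (algebraMap ℝ ℂ)).roots.Nodup ∧
      ∀ z ∈ (p.map (algebraMap ℝ ℂ)).roots, z.im = 0 := by
  refine ⟨Polynomial.map_ne_zero hsep.ne_zero, nodup_roots hsep.map, fun z hz ↦ ?_⟩
  rw [hp.roots_map] at hz
  obtain ⟨x, -, rfl⟩ := Multiset.mem_map.1 hz
  exact Complex.ofReal_im x

end SpectralFactors

theorem specQ_real_distinct_roots_case2_general
    (l0 l1 l2 l3 : ℕ) (hl : l0 + l3 + 1 = l1 + l2)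
    (e1 e2 e3 : ℝ) (h13 : e3 < e1) (h32 : e2 < e3) :
    (specQ e1 e2 e3 l0 l1 l2 l3).map (algebraMap ℝ ℂ) ≠ 0 ∧
    ((specQ e1 e2 e3 l0 l1 l2 l3).map (algebraMap ℝ ℂ)).roots.Nodup ∧
    ∀ z ∈ ((specQ e1 e2 e3 l0 l1 l2 l3).map (algebraMap ℝ ℂ)).roots, z.im = 0 := by
  have hA : (e1 - e3) * (e2 - e3) < 0 := mul_neg_of_pos_of_neg (sub_pos.2 h13) (sub_neg.2 h32)
  obtain ⟨hsplits, hsep⟩ :=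
    splits_and_separable_prod_spectralFactor (l := ![l0, l1, l2, l3]) hl hA
  have hdvd : specQ e1 e2 e3 l0 l1 l2 l3 ∣ ∏ i, spectralFactor e1 e2 e3 ![l0, l1, l2, l3] i :=
    specQ_dvd_prod_spectralFactor hl
  exact map_complex_roots_nodup_and_real (hsplits.of_dvd hsep.ne_zero hdvd) (hsep.of_dvd hdvd)

/-- If `l0 + l3 + 1 = l1 + l2`, `l2 + l3 ≥ l0 + l1 + 1` and
`l1 + l3 ≥ l0 + l2 + 1`, with `e1 > e3 > e2` and `e1+e2+e3 = 0` (purely imaginary modulus),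
then all zeros of the spectral polynomial `Q^{(l0,l1,l2,l3)}` are real and unequal. -/
theorem specQ_real_distinct_roots_case2
    (l0 l1 l2 l3 : ℕ) (hl : l0 + l3 + 1 = l1 + l2)
    (hl1 : l0 + l1 + 1 ≤ l2 + l3) (hl2 : l0 + l2 + 1 ≤ l1 + l3)
    (e1 e2 e3 : ℝ) (h13 : e3 < e1) (h32 : e2 < e3) (hsum : e1 + e2 + e3 = 0) :
    (specQ e1 e2 e3 l0 l1 l2 l3).map (algebraMap ℝ ℂ) ≠ 0 ∧
    ((specQ e1 e2 e3 l0 l1 l2 l3).map (algebraMap ℝ ℂ)).roots.Nodup ∧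
    ∀ z ∈ ((specQ e1 e2 e3 l0 l1 l2 l3).map (algebraMap ℝ ℂ)).roots, z.im = 0 :=
  specQ_real_distinct_roots_case2_general l0 l1 l2 l3 hl e1 e2 e3 h13 h32
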